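/- Let H be a Hopf algebra with invertible antipode γ, and let A be a right H-comodule (with coaction δ(a) = a⁽⁰⁾ ⊗ a⁽¹⁾ ∈ A ⊗ H), viewed as a left H-module via the induced action. Then the map τ : H* ⊗ A → A ⊗ H* defined by τ(λ ⊗ a) = a⁽⁰⁾ ⊗ λ a⁽¹⁾ (product in the dual Hopf algebra H*, with a⁽¹⁾ viewed in H* via the comodule structure over the restricted dual) is invertible, with inverse (a ⊗ λ) ↦ λ γ⁻¹(a⁽¹⁾) ⊗ a⁽⁰⁾, and is H-equivariant with respect to the H-action on H* given by x ▷ λ = x⁽²⁾ ⇀ λ ↼ γ(x⁽¹⁾). -/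

import Mathlib

/-!
STATEMENT 3: Let `H` be a Hopf algebra with invertible antipode and `K = H*` its
restricted dual (an abstract Hopf algebra with a nondegenerate Hopf pairing to `H`).
Let `A` be a right `K`-comodule, viewed as a left `H`-module via the pairing.  Then
`τ : K ⊗ A → A ⊗ K`, `λ ⊗ a ↦ a⁽⁰⁾ ⊗ λ a⁽¹⁾` is invertible with inverse
`a ⊗ λ ↦ λ γ⁻¹(a⁽¹⁾) ⊗ a⁽⁰⁾`, and is `H`-equivariant for the action
`x ▷ λ = x⁽²⁾ ⇀ λ ↼ γ(x⁽¹⁾)` on `K`.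
-/

open TensorProduct LinearMap

noncomputable section

variable (k : Type*) [Field k]
variable (H : Type*) [Ring H] [HopfAlgebra k H]
variable (K : Type*) [Ring K] [HopfAlgebra k K]

variable {H K}

/-- The action `x ▷ λ = x⁽²⁾ ⇀ λ ↼ γ(x⁽¹⁾)` of `H` on `K = H*`. -/
def actOnDual (actL actR : H ⊗[k] K →ₗ[k] K) : H ⊗[k] K →ₗ[k] K :=
  actL ∘ₗ (LinearMap.lTensor H actR) ∘ₗ
    (LinearMap.lTensor H (LinearMap.rTensor K (HopfAlgebra.antipode (R := k)))) ∘ₗ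
    (TensorProduct.assoc k H H K).toLinearMap ∘ₗ
    (LinearMap.rTensor K (TensorProduct.comm k H H).toLinearMap) ∘ₗ
    (LinearMap.rTensor K (Coalgebra.comul (R := k)))

/-- The diagonal action of `H` on a tensor product of `H`-modules. -/
def tensorAction {B C : Type*} [AddCommGroup B] [Module k B] [AddCommGroup C] [Module k C]
    (actB : H ⊗[k] B →ₗ[k] B) (actC : H ⊗[k] C →ₗ[k] C) :
    H ⊗[k] (B ⊗[k] C) →ₗ[k] B ⊗[k] C :=
  (TensorProduct.map actB actC) ∘ₗ
    (TensorProduct.tensorTensorTensorComm k H H B C).toLinearMap ∘ₗ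
    (LinearMap.rTensor (B ⊗[k] C) (Coalgebra.comul (R := k)))

variable {A : Type*} [AddCommGroup A] [Module k A]

/-- The map `τ : K ⊗ A → A ⊗ K`, `λ ⊗ a ↦ a⁽⁰⁾ ⊗ λ a⁽¹⁾`. -/
def tauStar (δA : A →ₗ[k] A ⊗[k] K) : K ⊗[k] A →ₗ[k] A ⊗[k] K :=
  (LinearMap.lTensor A (LinearMap.mul' k K)) ∘ₗ
    (TensorProduct.assoc k A K K).toLinearMap ∘ₗ
    (LinearMap.rTensor K (TensorProduct.comm k K A).toLinearMap) ∘ₗ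
    (TensorProduct.assoc k K A K).symm.toLinearMap ∘ₗ
    (LinearMap.lTensor K δA)

/-- The map `a ⊗ λ ↦ λ γ⁻¹(a⁽¹⁾) ⊗ a⁽⁰⁾`. -/
def tauStarInv (δA : A →ₗ[k] A ⊗[k] K) (γKinv : K →ₗ[k] K) : A ⊗[k] K →ₗ[k] K ⊗[k] A :=
  (TensorProduct.comm k A K).toLinearMap ∘ₗ
    (LinearMap.lTensor A (LinearMap.mul' k K)) ∘ₗ
    (LinearMap.lTensor A (LinearMap.lTensor K γKinv)) ∘ₗ
    (LinearMap.lTensor A (TensorProduct.comm k K K).toLinearMap) ∘ₗ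
    (TensorProduct.assoc k A K K).toLinearMap ∘ₗ
    (LinearMap.rTensor K δA)

/-- The left `H`-module structure on a right `K`-comodule, `h ▷ a = a⁽⁰⁾ ⟨a⁽¹⁾, h⟩`. -/
def actFromCoact (pair : K →ₗ[k] H →ₗ[k] k) (δA : A →ₗ[k] A ⊗[k] K) :
    H ⊗[k] A →ₗ[k] A :=
  (TensorProduct.rid k A).toLinearMap ∘ₗ
    (LinearMap.lTensor A (TensorProduct.lift pair)) ∘ₗ
    (TensorProduct.assoc k A K H).toLinearMap ∘ₗ
    (LinearMap.rTensor H δA) ∘ₗ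
    (TensorProduct.comm k H A).toLinearMap

section Helpers

open Coalgebra WithConv HopfAlgebra


/-- The linear map used to test against `y`. -/
def testMap (pair : K →ₗ[k] H →ₗ[k] k) (y : H) : A ⊗[k] K →ₗ[k] A :=
  (TensorProduct.rid k A).toLinearMap ∘ₗ LinearMap.lTensor A (pair.flip y)

theorem testMap_tmul (pair : K →ₗ[k] H →ₗ[k] k) (y : H) (b : A) (u : K) :
    testMap k pair y (b ⊗ₜ[k] u) = pair u y • b := by
  simp [testMap]

theorem testMap_ext (pair : K →ₗ[k] H →ₗ[k] k)
    (nd : ∀ lam : K, (∀ x : H, pair lam x = 0) → lam = 0)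
    (z w : A ⊗[k] K) (h : ∀ y, testMap k pair y z = testMap k pair y w) : z = w := by
  let b := Module.Basis.ofVectorSpace k A
  have key : ∀ (v : A ⊗[k] K) (y : H) i,
      b.repr (testMap k pair y v) i
        = pair (TensorProduct.lid k K (LinearMap.rTensor K (b.coord i) v)) y := by
    intro v y i
    induction v with
    | zero => simp
    | add v w hv hw => simp only [map_add, Finsupp.add_apply, LinearMap.add_apply, hv, hw]
    | tmul c u => simp [testMap_tmul, mul_comm]
  have h2 : ∀ i, TensorProduct.lid k K (LinearMap.rTensor K (b.coord i) z)
      = TensorProduct.lid k K (LinearMap.rTensor K (b.coord i) w) := by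
    intro i
    rw [← sub_eq_zero]
    apply nd
    intro x
    rw [map_sub, LinearMap.sub_apply, ← key, ← key, h, sub_self]
  classical
  have h3 := (TensorProduct.equivFinsuppOfBasisLeft (N := K) b).injective
  apply h3
  ext i
  simpa [TensorProduct.equivFinsuppOfBasisLeft_apply] using h2 i

theorem tauStar_tmul (δA : A →ₗ[k] A ⊗[k] K) (l : K) (a : A) :
    tauStar k δA (l ⊗ₜ[k] a) = LinearMap.lTensor A (LinearMap.mulLeft k l) (δA a) := by
  simp only [tauStar, LinearMap.comp_apply, LinearMap.lTensor_tmul, LinearEquiv.coe_coe]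
  generalize δA a = z
  induction z with
  | zero => simp
  | add v w hv hw => simp only [TensorProduct.tmul_add, map_add, hv, hw]
  | tmul c u => simp

theorem tauStarInv_tmul (δA : A →ₗ[k] A ⊗[k] K) (g : K →ₗ[k] K) (l : K) (a : A) :
    tauStarInv k δA g (a ⊗ₜ[k] l) = TensorProduct.comm k A K
      (LinearMap.lTensor A (LinearMap.mulLeft k l ∘ₗ g) (δA a)) := by
  simp only [tauStarInv, LinearMap.comp_apply, LinearMap.rTensor_tmul, LinearEquiv.coe_coe]
  generalize δA a = z
  induction z with
  | zero => simp
  | add v w hv hw => simp only [TensorProduct.add_tmul, map_add, hv, hw]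
  | tmul c u => simp

theorem ginv_mul (g : K →ₗ[k] K)
    (h1 : (HopfAlgebra.antipode (R := k) (A := K)) ∘ₗ g = LinearMap.id)
    (h2 : g ∘ₗ (HopfAlgebra.antipode (R := k) (A := K)) = LinearMap.id) (x y : K) :
    g (x * y) = g y * g x := by
  have e1 : ∀ z, antipode k (g z) = z := fun z => congr($h1 z)
  have e2 : ∀ z, g (antipode k z) = z := fun z => congr($h2 z)
  rw [← e2 (g y * g x), antipode_mul_antidistrib, e1, e1]

theorem counit_lemma (δA : A →ₗ[k] A ⊗[k] K)
    (counital : (TensorProduct.rid k A).toLinearMap ∘ₗ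
      (LinearMap.lTensor A (Coalgebra.counit (R := k))) ∘ₗ δA = LinearMap.id)
    (f : K →ₗ[k] K) (l : K) (hf : ∀ u, f u = counit (R := k) u • l) (a : A) :
    LinearMap.lTensor A f (δA a) = a ⊗ₜ[k] l := by
  have e : f = LinearMap.toSpanSingleton k K l ∘ₗ counit := by
    ext u; simp [hf]
  have h : LinearMap.lTensor A (counit (R := k)) (δA a) = a ⊗ₜ[k] (1 : k) := by
    apply (TensorProduct.rid k A).injective
    simpa using congr($counital a)
  rw [e, LinearMap.lTensor_comp, LinearMap.comp_apply, h]
  simp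

theorem tau_inv_one (δA : A →ₗ[k] A ⊗[k] K) (g : K →ₗ[k] K)
    (h1 : (HopfAlgebra.antipode (R := k) (A := K)) ∘ₗ g = LinearMap.id)
    (h2 : g ∘ₗ (HopfAlgebra.antipode (R := k) (A := K)) = LinearMap.id)
    (coassoc : (LinearMap.lTensor A (Coalgebra.comul (R := k))) ∘ₗ δA
      = (TensorProduct.assoc k A K K).toLinearMap ∘ₗ (LinearMap.rTensor K δA) ∘ₗ δA)
    (counital : (TensorProduct.rid k A).toLinearMap ∘ₗ
      (LinearMap.lTensor A (Coalgebra.counit (R := k))) ∘ₗ δA = LinearMap.id) :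
    (tauStar k δA) ∘ₗ (tauStarInv k δA g) = LinearMap.id := by
  apply TensorProduct.ext'
  intro a l
  rw [LinearMap.comp_apply, tauStarInv_tmul]
  let f : K ⊗[k] K →ₗ[k] K := LinearMap.mul' k K ∘ₗ
    LinearMap.rTensor K (LinearMap.mulLeft k l ∘ₗ g) ∘ₗ (TensorProduct.comm k K K).toLinearMap
  have key : ∀ z : A ⊗[k] K, tauStar k δA (TensorProduct.comm k A K
      (LinearMap.lTensor A (LinearMap.mulLeft k l ∘ₗ g) z)) =
      LinearMap.lTensor A f (TensorProduct.assoc k A K K (LinearMap.rTensor K δA z)) := by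
    intro z
    induction z with
    | zero => simp
    | add v w hv hw => simp only [map_add, hv, hw]
    | tmul b u =>
      simp only [LinearMap.lTensor_tmul, TensorProduct.comm_tmul, tauStar_tmul,
        LinearMap.rTensor_tmul]
      generalize δA b = z
      induction z with
      | zero => simp
      | add v w hv hw => simp only [TensorProduct.add_tmul, map_add, hv, hw]
      | tmul c u => simp [f, mul_assoc]
  have hc : LinearMap.lTensor A (comul (R := k)) (δA a) =
    TensorProduct.assoc k A K K (LinearMap.rTensor K δA (δA a)) := congr($coassoc a)
  rw [key, ← hc, ← LinearMap.comp_apply, ← LinearMap.lTensor_comp]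
  apply counit_lemma k δA counital
  intro u
  have e2 : ∀ z, g (antipode k z) = z := fun z => congr($h2 z)
  have := congr(g $(sum_antipode_mul_eq_smul (ℛ k u)))
  have g1 : g 1 = 1 := by simpa using e2 1
  simp only [map_sum, ginv_mul k g h1 h2, e2, map_smul, g1] at this
  rw [LinearMap.comp_apply, ← (ℛ k u).eq]
  simp only [f, map_sum, LinearMap.comp_apply, LinearEquiv.coe_coe, TensorProduct.comm_tmul,
    LinearMap.rTensor_tmul, LinearMap.mul'_apply, LinearMap.mulLeft_apply, mul_assoc,
    ← Finset.mul_sum, this]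
  simp

theorem tau_inv_two (δA : A →ₗ[k] A ⊗[k] K) (g : K →ₗ[k] K)
    (h1 : (HopfAlgebra.antipode (R := k) (A := K)) ∘ₗ g = LinearMap.id)
    (h2 : g ∘ₗ (HopfAlgebra.antipode (R := k) (A := K)) = LinearMap.id)
    (coassoc : (LinearMap.lTensor A (Coalgebra.comul (R := k))) ∘ₗ δA
      = (TensorProduct.assoc k A K K).toLinearMap ∘ₗ (LinearMap.rTensor K δA) ∘ₗ δA)
    (counital : (TensorProduct.rid k A).toLinearMap ∘ₗ
      (LinearMap.lTensor A (Coalgebra.counit (R := k))) ∘ₗ δA = LinearMap.id) :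
    (tauStarInv k δA g) ∘ₗ (tauStar k δA) = LinearMap.id := by
  apply TensorProduct.ext'
  intro l a
  rw [LinearMap.comp_apply, tauStar_tmul]
  let f : K ⊗[k] K →ₗ[k] K := LinearMap.mul' k K ∘ₗ
    TensorProduct.map (LinearMap.mulLeft k l) g ∘ₗ (TensorProduct.comm k K K).toLinearMap
  have key : ∀ z : A ⊗[k] K, tauStarInv k δA g
      (LinearMap.lTensor A (LinearMap.mulLeft k l) z) = TensorProduct.comm k A K
      (LinearMap.lTensor A f (TensorProduct.assoc k A K K (LinearMap.rTensor K δA z))) := by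
    intro z
    induction z with
    | zero => simp
    | add v w hv hw => simp only [map_add, hv, hw]
    | tmul b u =>
      simp only [LinearMap.lTensor_tmul, tauStarInv_tmul,
        LinearMap.rTensor_tmul]
      generalize δA b = z
      induction z with
      | zero => simp
      | add v w hv hw => simp only [TensorProduct.add_tmul, map_add, hv, hw]
      | tmul c u => simp [f, mul_assoc]
  have hc : LinearMap.lTensor A (comul (R := k)) (δA a) =
    TensorProduct.assoc k A K K (LinearMap.rTensor K δA (δA a)) := congr($coassoc a)
  rw [key, ← hc, ← LinearMap.comp_apply (LinearMap.lTensor A f), ← LinearMap.lTensor_comp]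
  rw [counit_lemma k δA counital _ l, TensorProduct.comm_tmul, LinearMap.id_apply]
  intro u
  have e2 : ∀ z, g (antipode k z) = z := fun z => congr($h2 z)
  have := congr(g $(sum_mul_antipode_eq_smul (ℛ k u)))
  have g1 : g 1 = 1 := by simpa using e2 1
  simp only [map_sum, ginv_mul k g h1 h2, e2, map_smul, g1] at this
  rw [LinearMap.comp_apply, ← (ℛ k u).eq]
  simp only [f, map_sum, LinearMap.comp_apply, LinearEquiv.coe_coe, TensorProduct.comm_tmul,
    TensorProduct.map_tmul, LinearMap.mul'_apply, LinearMap.mulLeft_apply, mul_assoc,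
    ← Finset.mul_sum, this]
  simp

/-- First inclusion. -/
def inc1 : H →ₗ[k] H ⊗[k] H :=
  (Algebra.TensorProduct.includeLeft : H →ₐ[k] H ⊗[k] H).toLinearMap
/-- Second inclusion. -/
def inc2 : H →ₗ[k] H ⊗[k] H :=
  (Algebra.TensorProduct.includeRight : H →ₐ[k] H ⊗[k] H).toLinearMap

theorem inc1_apply (x : H) : inc1 k x = x ⊗ₜ[k] 1 := rfl
theorem inc2_apply (x : H) : inc2 k x = 1 ⊗ₜ[k] x := rfl

/-- `x ↦ γ(x₁) y x₂`. -/
def cmap (y : H) : H →ₗ[k] H :=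
  (toConv (antipode k (A := H)) * toConv (LinearMap.mulLeft k y)).ofConv

theorem cmap_apply (y x : H) {ι : Type*} (r : Coalgebra.Repr k x ι) :
    cmap k y x = ∑ i ∈ r.index, antipode k (r.left i) * (y * r.right i) :=
  r.convMul_apply (toConv (antipode k (A := H))) (toConv (LinearMap.mulLeft k y))

theorem conv_inc2 : toConv (inc2 k) * toConv (comul ∘ₗ antipode k (A := H)) =
    toConv (inc1 k ∘ₗ antipode k) := by
  have a1 : toConv (inc1 k ∘ₗ antipode k (A := H)) * toConv (inc1 k) = 1 := by
    ext x
    rw [(ℛ k x).convMul_apply]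
    have := congr(inc1 k $(sum_antipode_mul_eq_smul (ℛ k x)))
    simp only [map_sum, inc1_apply, map_smul] at this
    simp only [inc1_apply, LinearMap.comp_apply, Algebra.TensorProduct.tmul_mul_tmul, mul_one,
      LinearMap.convOne_apply, Algebra.algebraMap_eq_smul_one]
    exact this
  have a2 : toConv (inc1 k) * toConv (inc2 k) = toConv (comul (R := k) (A := H)) := by
    ext x
    rw [(ℛ k x).convMul_apply]
    simp only [inc1_apply, inc2_apply, Algebra.TensorProduct.tmul_mul_tmul, mul_one, one_mul]
    exact (ℛ k x).eq
  have a3 : toConv (inc1 k ∘ₗ antipode k (A := H)) * toConv (comul (R := k) (A := H))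
      = toConv (inc2 k) := by
    rw [← a2, ← mul_assoc, a1, one_mul]
  rw [← a3, mul_assoc, LinearMap.comul_right_inv, mul_one]

/-- `x ↦ w Δ(x)`. -/
def qmap (w : H ⊗[k] H) : H →ₗ[k] H ⊗[k] H := LinearMap.mulLeft k w ∘ₗ comul

theorem core_right (y : H) :
    toConv (inc2 k) * toConv (comul ∘ₗ cmap k y) =
    toConv (inc1 k ∘ₗ antipode k) * toConv (qmap k (comul (R := k) y)) := by
  have : toConv (comul ∘ₗ cmap k y) = toConv (comul ∘ₗ antipode k (A := H)) *
      toConv (qmap k (comul (R := k) y)) := by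
    ext x
    rw [(ℛ k x).convMul_apply]
    change comul (cmap k y x) = _
    rw [cmap_apply k y x (ℛ k x), map_sum]
    simp only [Bialgebra.comul_mul]
    rfl
  rw [this, ← mul_assoc, conv_inc2]

theorem core_left (s t : H) :
    toConv (inc1 k ∘ₗ cmap k s) * toConv (inc2 k ∘ₗ LinearMap.mulLeft k t) =
    toConv (inc1 k ∘ₗ antipode k) * toConv (qmap k (s ⊗ₜ[k] t)) := by
  have e1 : toConv (inc1 k ∘ₗ cmap k s) = toConv (inc1 k ∘ₗ antipode k (A := H)) *
      toConv (inc1 k ∘ₗ LinearMap.mulLeft k s) := by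
    ext x
    rw [(ℛ k x).convMul_apply]
    change inc1 k (cmap k s x) = _
    rw [cmap_apply k s x (ℛ k x), map_sum]
    simp [inc1_apply]
  have e2 : toConv (inc1 k ∘ₗ LinearMap.mulLeft k s) * toConv (inc2 k ∘ₗ LinearMap.mulLeft k t)
      = toConv (qmap k (s ⊗ₜ[k] t)) := by
    ext x
    rw [(ℛ k x).convMul_apply]
    change _ = (s ⊗ₜ[k] t) * comul x
    rw [← (ℛ k x).eq, Finset.mul_sum]
    simp [inc1_apply, inc2_apply]
  rw [e1, mul_assoc, e2]

theorem core (y x : H) {ι ι' : Type*} (r : Coalgebra.Repr k x ι) (r' : Coalgebra.Repr k y ι') :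
    ∑ i ∈ r.index, ∑ j ∈ r'.index,
      (cmap k (r'.left j) (r.left i)) ⊗ₜ[k] (r'.right j * r.right i) =
    ∑ i ∈ r.index, (1 ⊗ₜ[k] r.left i) * comul (R := k) (cmap k y (r.right i)) := by
  have R := r.convMul_apply (toConv (inc2 k)) (toConv (comul ∘ₗ cmap k y))
  rw [core_right] at R
  rw [r.convMul_apply] at R
  refine Eq.trans ?_ R
  rw [Finset.sum_comm]
  have L' : ∀ j, ∑ i ∈ r.index,
      (cmap k (r'.left j) (r.left i)) ⊗ₜ[k] (r'.right j * r.right i) =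
      ∑ i ∈ r.index, (inc1 k (antipode k (r.left i))) *
        ((r'.left j ⊗ₜ[k] r'.right j) * comul (R := k) (r.right i)) := by
    intro j
    have L1 := r.convMul_apply (toConv (inc1 k ∘ₗ cmap k (r'.left j)))
      (toConv (inc2 k ∘ₗ LinearMap.mulLeft k (r'.right j)))
    have L2 := r.convMul_apply (toConv (inc1 k ∘ₗ antipode k (A := H)))
      (toConv (qmap k (r'.left j ⊗ₜ[k] r'.right j)))
    rw [core_left, L2] at L1
    refine Eq.trans ?_ L1.symm
    simp [inc1_apply, inc2_apply]
  rw [Finset.sum_congr rfl (fun j _ => L' j), Finset.sum_comm]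
  refine Finset.sum_congr rfl fun i _ => ?_
  rw [← Finset.mul_sum, ← Finset.sum_mul, r'.eq]
  rfl

theorem act_eq (pair : K →ₗ[k] H →ₗ[k] k) (δA : A →ₗ[k] A ⊗[k] K) (x : H) (a : A) :
    actFromCoact k pair δA (x ⊗ₜ[k] a) = testMap k pair x (δA a) := by
  simp only [actFromCoact, LinearMap.comp_apply, LinearEquiv.coe_coe, TensorProduct.comm_tmul,
    LinearMap.rTensor_tmul]
  generalize δA a = z
  induction z with
  | zero => simp
  | add v w hv hw => simp only [TensorProduct.add_tmul, map_add, hv, hw]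
  | tmul c u => simp [testMap_tmul]

theorem act_act (pair : K →ₗ[k] H →ₗ[k] k)
    (pair_mulH : (TensorProduct.lift pair) ∘ₗ (LinearMap.lTensor K (LinearMap.mul' k H))
      = (LinearMap.mul' k k) ∘ₗ
          (TensorProduct.map (TensorProduct.lift pair) (TensorProduct.lift pair)) ∘ₗ
          (TensorProduct.tensorTensorTensorComm k K K H H).toLinearMap ∘ₗ
          (LinearMap.rTensor (H ⊗[k] H) (Coalgebra.comul (R := k))))
    (δA : A →ₗ[k] A ⊗[k] K)
    (coassoc : (LinearMap.lTensor A (Coalgebra.comul (R := k))) ∘ₗ δA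
      = (TensorProduct.assoc k A K K).toLinearMap ∘ₗ (LinearMap.rTensor K δA) ∘ₗ δA)
    (y x : H) (a : A) :
    actFromCoact k pair δA (y ⊗ₜ[k] actFromCoact k pair δA (x ⊗ₜ[k] a)) =
      actFromCoact k pair δA ((y * x) ⊗ₜ[k] a) := by
  simp only [act_eq]
  let Q : A ⊗[k] (K ⊗[k] K) →ₗ[k] A := (TensorProduct.rid k A).toLinearMap ∘ₗ
    LinearMap.lTensor A (LinearMap.mul' k k ∘ₗ TensorProduct.map (pair.flip y) (pair.flip x))
  have e1 : ∀ z, testMap k pair y (δA (testMap k pair x z)) =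
      Q (TensorProduct.assoc k A K K (LinearMap.rTensor K δA z)) := by
    intro z
    induction z with
    | zero => simp
    | add v w hv hw => simp only [map_add, hv, hw]
    | tmul b u =>
      simp only [testMap_tmul, map_smul, LinearMap.rTensor_tmul]
      generalize δA b = z
      induction z with
      | zero => simp
      | add v w hv hw => simp only [TensorProduct.add_tmul, map_add, smul_add, hv, hw]
      | tmul c v => simp [Q, testMap_tmul, smul_smul, mul_comm]
  have e2 : ∀ z, Q (LinearMap.lTensor A (comul (R := k)) z) = testMap k pair (y * x) z := by
    intro z
    induction z with
    | zero => simp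
    | add v w hv hw => simp only [map_add, hv, hw]
    | tmul b u =>
      have := congr($pair_mulH (u ⊗ₜ[k] (y ⊗ₜ[k] x)))
      simp only [LinearMap.comp_apply, LinearMap.lTensor_tmul, LinearMap.mul'_apply,
        TensorProduct.lift.tmul, LinearMap.rTensor_tmul, LinearEquiv.coe_coe] at this
      rw [testMap_tmul, this]
      simp only [LinearMap.lTensor_tmul]
      generalize (comul u : K ⊗[k] K) = w
      induction w with
      | zero => simp
      | add v w hv hw =>
        simp only [TensorProduct.add_tmul, TensorProduct.tmul_add, map_add, add_smul, hv, hw]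
      | tmul c v => simp [Q]
  have hc : LinearMap.lTensor A (comul (R := k)) (δA a) =
    TensorProduct.assoc k A K K (LinearMap.rTensor K δA (δA a)) := congr($coassoc a)
  rw [e1, ← hc, e2]

theorem pair_dual (pair : K →ₗ[k] H →ₗ[k] k)
    (actL actR : H ⊗[k] K →ₗ[k] K)
    (hactL : ∀ (x y : H) (lam : K), pair (actL (x ⊗ₜ[k] lam)) y = pair lam (y * x))
    (hactR : ∀ (x y : H) (lam : K), pair (actR (x ⊗ₜ[k] lam)) y = pair lam (x * y))
    (x y : H) (l : K) :
    pair (actOnDual k actL actR (x ⊗ₜ[k] l)) y = pair l (cmap k y x) := by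
  rw [cmap_apply k y x (ℛ k x)]
  simp only [actOnDual, LinearMap.comp_apply, LinearMap.rTensor_tmul]
  conv_lhs => rw [← (ℛ k x).eq]
  simp [TensorProduct.sum_tmul, hactL, hactR]

/-- `s ⊗ t ↦ ⟨l, s⟩ t • a`. -/
def gmap (pair : K →ₗ[k] H →ₗ[k] k) (act : H ⊗[k] A →ₗ[k] A) (l : K) (a : A) :
    H ⊗[k] H →ₗ[k] A :=
  (TensorProduct.lid k A).toLinearMap ∘ₗ
    TensorProduct.map (pair l) ((TensorProduct.curry act).flip a)

theorem gmap_tmul (pair : K →ₗ[k] H →ₗ[k] k) (act : H ⊗[k] A →ₗ[k] A) (l : K) (a : A)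
    (s t : H) : gmap k pair act l a (s ⊗ₜ[k] t) = pair l s • act (t ⊗ₜ[k] a) := by
  simp [gmap]

theorem test_tau (pair : K →ₗ[k] H →ₗ[k] k)
    (pair_mulK : (TensorProduct.lift pair) ∘ₗ (LinearMap.rTensor H (LinearMap.mul' k K))
      = (LinearMap.mul' k k) ∘ₗ
          (TensorProduct.map (TensorProduct.lift pair) (TensorProduct.lift pair)) ∘ₗ
          (TensorProduct.tensorTensorTensorComm k K K H H).toLinearMap ∘ₗ
          (LinearMap.lTensor (K ⊗[k] K) (Coalgebra.comul (R := k))))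
    (δA : A →ₗ[k] A ⊗[k] K) (y : H) (l : K) (a : A) :
    testMap k pair y (tauStar k δA (l ⊗ₜ[k] a)) =
      gmap k pair (actFromCoact k pair δA) l a (comul y) := by
  rw [tauStar_tmul, ← (ℛ k y).eq, map_sum]
  simp only [gmap_tmul, act_eq]
  generalize δA a = z
  induction z with
  | zero => simp
  | add v w hv hw => simp only [map_add, hv, hw, smul_add, Finset.sum_add_distrib]
  | tmul b u =>
    have := congr($pair_mulK ((l ⊗ₜ[k] u) ⊗ₜ[k] y))
    simp only [LinearMap.comp_apply, LinearMap.lTensor_tmul, LinearMap.mul'_apply,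
        TensorProduct.lift.tmul, LinearMap.rTensor_tmul, LinearEquiv.coe_coe] at this
    rw [← (ℛ k y).eq] at this
    simp only [LinearMap.lTensor_tmul, testMap_tmul, LinearMap.mulLeft_apply, this]
    simp [TensorProduct.tmul_sum, Finset.sum_smul, smul_smul]

theorem tensorAction_tmul {B C : Type*} [AddCommGroup B] [Module k B] [AddCommGroup C]
    [Module k C] (actB : H ⊗[k] B →ₗ[k] B) (actC : H ⊗[k] C →ₗ[k] C) (x : H) {ι : Type*}
    (r : Coalgebra.Repr k x ι) (b : B) (c : C) :
    tensorAction k actB actC (x ⊗ₜ[k] (b ⊗ₜ[k] c)) =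
      ∑ i ∈ r.index, actB (r.left i ⊗ₜ[k] b) ⊗ₜ[k] actC (r.right i ⊗ₜ[k] c) := by
  simp only [tensorAction, LinearMap.comp_apply, LinearMap.rTensor_tmul]
  conv_lhs => rw [← r.eq]
  simp [TensorProduct.sum_tmul]

theorem equivariant (pair : K →ₗ[k] H →ₗ[k] k)
    (pair_mulK : (TensorProduct.lift pair) ∘ₗ (LinearMap.rTensor H (LinearMap.mul' k K))
      = (LinearMap.mul' k k) ∘ₗ
          (TensorProduct.map (TensorProduct.lift pair) (TensorProduct.lift pair)) ∘ₗ
          (TensorProduct.tensorTensorTensorComm k K K H H).toLinearMap ∘ₗ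
          (LinearMap.lTensor (K ⊗[k] K) (Coalgebra.comul (R := k))))
    (pair_mulH : (TensorProduct.lift pair) ∘ₗ (LinearMap.lTensor K (LinearMap.mul' k H))
      = (LinearMap.mul' k k) ∘ₗ
          (TensorProduct.map (TensorProduct.lift pair) (TensorProduct.lift pair)) ∘ₗ
          (TensorProduct.tensorTensorTensorComm k K K H H).toLinearMap ∘ₗ
          (LinearMap.rTensor (H ⊗[k] H) (Coalgebra.comul (R := k))))
    (nd : ∀ lam : K, (∀ x : H, pair lam x = 0) → lam = 0)
    (actL actR : H ⊗[k] K →ₗ[k] K)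
    (hactL : ∀ (x y : H) (lam : K), pair (actL (x ⊗ₜ[k] lam)) y = pair lam (y * x))
    (hactR : ∀ (x y : H) (lam : K), pair (actR (x ⊗ₜ[k] lam)) y = pair lam (x * y))
    (δA : A →ₗ[k] A ⊗[k] K)
    (coassoc : (LinearMap.lTensor A (Coalgebra.comul (R := k))) ∘ₗ δA
      = (TensorProduct.assoc k A K K).toLinearMap ∘ₗ (LinearMap.rTensor K δA) ∘ₗ δA) :
    (tauStar k δA) ∘ₗ (tensorAction k (actOnDual k actL actR) (actFromCoact k pair δA))
      = (tensorAction k (actFromCoact k pair δA) (actOnDual k actL actR)) ∘ₗ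
          (LinearMap.lTensor H (tauStar k δA)) := by
  apply TensorProduct.ext
  ext x l a
  change tauStar k δA (tensorAction k _ _ (x ⊗ₜ[k] (l ⊗ₜ[k] a))) =
    tensorAction k _ _ (x ⊗ₜ[k] tauStar k δA (l ⊗ₜ[k] a))
  apply testMap_ext k pair nd
  intro y
  have hR : ∀ z, testMap k pair y (tensorAction k (actFromCoact k pair δA)
      (actOnDual k actL actR) (x ⊗ₜ[k] z)) = ∑ i ∈ (ℛ k x).index,
        actFromCoact k pair δA ((ℛ k x).left i ⊗ₜ[k]
          testMap k pair (cmap k y ((ℛ k x).right i)) z) := by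
    intro z
    induction z with
    | zero => simp
    | add v w hv hw => simp only [TensorProduct.tmul_add, map_add, hv, hw, Finset.sum_add_distrib]
    | tmul b u =>
      rw [tensorAction_tmul k _ _ x (ℛ k x), map_sum]
      simp only [testMap_tmul, pair_dual k pair actL actR hactL hactR, TensorProduct.tmul_smul,
        map_smul]
  have hG : ∀ (s : H) (w : H ⊗[k] H), actFromCoact k pair δA (s ⊗ₜ[k]
      gmap k pair (actFromCoact k pair δA) l a w) =
      gmap k pair (actFromCoact k pair δA) l a ((1 ⊗ₜ[k] s) * w) := by
    intro s w
    induction w with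
    | zero => simp
    | add v w hv hw => simp only [TensorProduct.tmul_add, map_add, hv, hw, mul_add]
    | tmul b u =>
      simp only [gmap_tmul, Algebra.TensorProduct.tmul_mul_tmul, one_mul, TensorProduct.tmul_smul,
        map_smul, act_act k pair pair_mulH δA coassoc]
  rw [hR, tensorAction_tmul k _ _ x (ℛ k x), map_sum, map_sum]
  simp only [test_tau k pair pair_mulK, hG]
  rw [← map_sum, ← core k y x (ℛ k x) (ℛ k y), map_sum]
  refine Finset.sum_congr rfl fun i _ => ?_
  rw [← (ℛ k y).eq, map_sum, map_sum]
  simp only [gmap_tmul, pair_dual k pair actL actR hactL hactR,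
    act_act k pair pair_mulH δA coassoc]

end Helpers

theorem statement3
    -- the canonical Hopf pairing between `K = H*` and `H`:
    (pair : K →ₗ[k] H →ₗ[k] k)
    (pair_mulK : (TensorProduct.lift pair) ∘ₗ (LinearMap.rTensor H (LinearMap.mul' k K))
      = (LinearMap.mul' k k) ∘ₗ
          (TensorProduct.map (TensorProduct.lift pair) (TensorProduct.lift pair)) ∘ₗ
          (TensorProduct.tensorTensorTensorComm k K K H H).toLinearMap ∘ₗ
          (LinearMap.lTensor (K ⊗[k] K) (Coalgebra.comul (R := k))))
    (pair_mulH : (TensorProduct.lift pair) ∘ₗ (LinearMap.lTensor K (LinearMap.mul' k H))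
      = (LinearMap.mul' k k) ∘ₗ
          (TensorProduct.map (TensorProduct.lift pair) (TensorProduct.lift pair)) ∘ₗ
          (TensorProduct.tensorTensorTensorComm k K K H H).toLinearMap ∘ₗ
          (LinearMap.rTensor (H ⊗[k] H) (Coalgebra.comul (R := k))))
    (pair_one : ∀ x : H, pair 1 x = Coalgebra.counit (R := k) x)
    (pair_one' : ∀ lam : K, pair lam 1 = Coalgebra.counit (R := k) lam)
    (pair_antipode : ∀ (lam : K) (x : H),
      pair (HopfAlgebra.antipode (R := k) lam) x = pair lam (HopfAlgebra.antipode (R := k) x))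
    (pair_nondeg : (∀ lam : K, (∀ x : H, pair lam x = 0) → lam = 0) ∧
      (∀ x : H, (∀ lam : K, pair lam x = 0) → x = 0))
    -- the antipodes are invertible:
    (γHinv : H →ₗ[k] H)
    (hγH : (HopfAlgebra.antipode (R := k) (A := H)) ∘ₗ γHinv = LinearMap.id ∧
      γHinv ∘ₗ (HopfAlgebra.antipode (R := k) (A := H)) = LinearMap.id)
    (γKinv : K →ₗ[k] K)
    (hγK : (HopfAlgebra.antipode (R := k) (A := K)) ∘ₗ γKinv = LinearMap.id ∧
      γKinv ∘ₗ (HopfAlgebra.antipode (R := k) (A := K)) = LinearMap.id)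
    -- the coregular actions `⟨x ⇀ λ, y⟩ = ⟨λ, yx⟩`, `⟨λ ↼ x, y⟩ = ⟨λ, xy⟩`:
    (actL actR : H ⊗[k] K →ₗ[k] K)
    (hactL : ∀ (x y : H) (lam : K), pair (actL (x ⊗ₜ[k] lam)) y = pair lam (y * x))
    (hactR : ∀ (x y : H) (lam : K), pair (actR (x ⊗ₜ[k] lam)) y = pair lam (x * y))
    -- `A` is a right `K`-comodule:
    (δA : A →ₗ[k] A ⊗[k] K)
    (coassoc : (LinearMap.lTensor A (Coalgebra.comul (R := k))) ∘ₗ δA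
      = (TensorProduct.assoc k A K K).toLinearMap ∘ₗ (LinearMap.rTensor K δA) ∘ₗ δA)
    (counital : (TensorProduct.rid k A).toLinearMap ∘ₗ
      (LinearMap.lTensor A (Coalgebra.counit (R := k))) ∘ₗ δA = LinearMap.id) :
    -- `τ` is invertible, with the stated inverse:
    (tauStar k δA) ∘ₗ (tauStarInv k δA γKinv) = LinearMap.id ∧
    (tauStarInv k δA γKinv) ∘ₗ (tauStar k δA) = LinearMap.id ∧
    -- `τ` is `H`-equivariant:
    (tauStar k δA) ∘ₗ (tensorAction k (actOnDual k actL actR) (actFromCoact k pair δA))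
      = (tensorAction k (actFromCoact k pair δA) (actOnDual k actL actR)) ∘ₗ
          (LinearMap.lTensor H (tauStar k δA)) := by
  exact ⟨tau_inv_one k δA γKinv hγK.1 hγK.2 coassoc counital,
    tau_inv_two k δA γKinv hγK.1 hγK.2 coassoc counital,
    equivariant k pair pair_mulK pair_mulH pair_nondeg.1 actL actR hactL hactR δA coassoc⟩


end
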